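/- Let k be a field of characteristic p > 0, n ≥ 2, and let g be a polynomial in k[x₀, …, x_n] which involves only the variables x₀, …, x_{n−2}. Set f = g + x_{n−1}·x_n. Then f^{p−1} does not belong to the ideal of k[x₀, …, x_n] generated by x₀^p, x₁^p, …, x_n^p. -/

import Mathlib

/-!
The variable `x_n` does not occur in `g`, so `f = g + x_{n-1} x_n` has degree one in `x_n`, and
the part of `f ^ (p - 1)` of degree `p - 1` in `x_n` is `(x_{n-1} x_n) ^ (p - 1)`. This monomial
therefore occurs in `f ^ (p - 1)` with coefficient one. The ideal generated by the `x_i ^ p` is a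
monomial ideal, so it contains only polynomials all of whose monomials have some exponent at least
`p`, whereas the exponents here are at most `p - 1`.
-/

section

open MvPolynomial

variable {σ R : Type*} [CommSemiring R]

theorem mem_span_range_X_pow_iff {e : σ → ℕ} {f : MvPolynomial σ R} :
    f ∈ Ideal.span (Set.range fun i => X i ^ e i) ↔ ∀ m ∈ f.support, ∃ i, e i ≤ m i := by
  have generators_eq : (Set.range fun i => (X i ^ e i : MvPolynomial σ R)) =
      (fun m => monomial m 1) '' Set.range fun i => Finsupp.single i (e i) := by
    simp only [X_pow_eq_monomial, ← Set.range_comp, Function.comp_def]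
  simp only [generators_eq, mem_ideal_span_monomial_image, Set.exists_range_iff,
    Finsupp.single_le_iff]

theorem degreeOf_add_monomial_le {i : σ} {g : MvPolynomial σ R} {m : σ →₀ ℕ}
    (hg : g.degreeOf i ≤ m i) (r : R) : (g + monomial m r).degreeOf i ≤ m i := by
  have monomial_le : (monomial m r).degreeOf i ≤ m i :=
    degreeOf_le_iff.mpr fun d hd => by
      rw [Finset.mem_singleton.mp (support_monomial_subset hd)]
  exact (degreeOf_add_le i _ _).trans (max_le hg monomial_le)

theorem coeff_nsmul_add_monomial_pow {i : σ} {g : MvPolynomial σ R} {m : σ →₀ ℕ}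
    (hg : g.degreeOf i < m i) (r : R) (N : ℕ) :
    coeff (N • m) ((g + monomial m r) ^ N) = r ^ N := by
  induction N with
  | zero => simp
  | succ N ih =>
    have degreeOf_lt : ((g + monomial m r) ^ N * g).degreeOf i < ((N + 1) • m) i :=
      calc ((g + monomial m r) ^ N * g).degreeOf i
          ≤ ((g + monomial m r) ^ N).degreeOf i + g.degreeOf i := degreeOf_mul_le i _ _
        _ ≤ N * (g + monomial m r).degreeOf i + g.degreeOf i := by
          gcongr; exact degreeOf_pow_le i _ N
        _ ≤ N * m i + g.degreeOf i := by
          gcongr; exact degreeOf_add_monomial_le hg.le r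
        _ < N * m i + m i := by gcongr
        _ = ((N + 1) • m) i := by rw [Finsupp.smul_apply, smul_eq_mul, add_one_mul]
    have coeff_mul_g : coeff ((N + 1) • m) ((g + monomial m r) ^ N * g) = 0 :=
      notMem_support_iff.mp (notMem_support_of_degreeOf_lt i degreeOf_lt)
    rw [pow_succ, mul_add, coeff_add, coeff_mul_g, zero_add, succ_nsmul, coeff_mul_monomial, ih,
      pow_succ]

theorem pow_not_mem_frobenius_power_general [Nontrivial R] {a b : σ} (hab : a ≠ b)
    {g : MvPolynomial σ R} (hg : b ∉ g.vars) {N p : ℕ} (hN : N < p) :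
    (g + X a * X b) ^ N ∉ Ideal.span (Set.range fun i : σ => X i ^ p) := by
  classical
  let m : σ →₀ ℕ := Finsupp.single a 1 + Finsupp.single b 1
  have X_mul_X : (X a * X b : MvPolynomial σ R) = monomial m 1 := by
    simp only [X, monomial_mul, one_mul, m]
  have degreeOf_lt : g.degreeOf b < m b := by
    have : g.degreeOf b = 0 := by simpa only [mem_vars_iff_degreeOf_ne_zero, not_not] using hg
    simp [this, m]
  have m_le_one (i : σ) : m i ≤ 1 := by
    simp only [m, Finsupp.add_apply, Finsupp.single_apply]
    grind
  have mem_support : N • m ∈ ((g + X a * X b) ^ N).support := by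
    rw [mem_support_iff, X_mul_X, coeff_nsmul_add_monomial_pow degreeOf_lt, one_pow]
    exact one_ne_zero
  intro hmem
  obtain ⟨i, hi⟩ := mem_span_range_X_pow_iff.mp hmem _ mem_support
  have exponent_le : (N • m) i ≤ N := mul_le_of_le_one_right N.zero_le (m_le_one i)
  exact (hi.trans exponent_le).not_gt hN

end

/-- Let `k` be a field of characteristic `p > 0`, `n ≥ 2`, and `g ∈ k[x₀,…,xₙ]` a polynomial
involving only the variables `x₀, …, x_{n-2}`. Set `f = g + x_{n-1} * xₙ`. Then `f^(p-1)` does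
not lie in the ideal generated by `x₀^p, …, xₙ^p`. -/
theorem pow_not_mem_frobenius_power (k : Type*) [Field k] (p n : ℕ) [Fact p.Prime] [CharP k p]
    (hn : 2 ≤ n) (g : MvPolynomial (Fin (n + 1)) k) (hg : ∀ i ∈ g.vars, (i : ℕ) + 2 ≤ n) :
    (g + MvPolynomial.X ⟨n - 1, by omega⟩ * MvPolynomial.X ⟨n, by omega⟩) ^ (p - 1) ∉
      Ideal.span (Set.range fun i : Fin (n + 1) => MvPolynomial.X i ^ p) := by
  exact pow_not_mem_frobenius_power_general (by simp only [ne_eq, Fin.mk.injEq]; omega)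
    (fun h => by simpa using hg _ h) (Nat.sub_one_lt (Fact.out : p.Prime).ne_zero)
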